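/- For every σ > 0 and every α ∈ ℝ, 0 ≤ Φ(α/σ)·α + φ(α/σ)·σ − max{0, α} ≤ σ/√(2π); consequently the smooth ReLU ψ_sReLU(α;σ) = Φ(α/σ)α + φ(α/σ)σ converges to the ReLU function max{0,α} uniformly in α as σ → 0⁺. -/

import Mathlib

open Real Set

/-- The probability density function of the standard normal distribution. -/
noncomputable def stdGaussPDF (v : ℝ) : ℝ :=
  (1 / Real.sqrt (2 * Real.pi)) * Real.exp (-v ^ 2 / 2)

/-- The cumulative distribution function of the standard normal distribution. -/
noncomputable def stdGaussCDF (v : ℝ) : ℝ :=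
  ∫ t in Set.Iic v, stdGaussPDF t

/-- The smooth ReLU ψ_sReLU(α;σ) = Φ(α/σ)α + φ(α/σ)σ. -/
noncomputable def smoothReLU (σ α : ℝ) : ℝ :=
  stdGaussCDF (α / σ) * α + stdGaussPDF (α / σ) * σ

open MeasureTheory ProbabilityTheory
open scoped NNReal

/-!
If `Z` is standard normal, then the smooth ReLU is the average `E[max 0 (α - σ Z)]` of the ReLU over
Gaussian perturbations of its argument. Convexity of the ReLU gives the lower bound `max 0 α`, and
its subadditivity gives the upper bound `max 0 α + E[max 0 (-σ Z)]`, whose last term is the smooth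
ReLU at `0`, namely `σ φ(0) = σ / √(2π)`.
-/

section PositivePart

variable {Ω : Type*} [MeasurableSpace Ω] {μ : Measure Ω} {X Y : Ω → ℝ}

lemma integrable_max_zero (hX : Integrable X μ) : Integrable (fun ω ↦ max 0 (X ω)) μ :=
  (integrable_zero Ω ℝ μ).sup hX

lemma max_zero_integral_le_integral_max_zero (hX : Integrable X μ) :
    max 0 (∫ ω, X ω ∂μ) ≤ ∫ ω, max 0 (X ω) ∂μ :=
  max_le (integral_nonneg fun _ ↦ le_max_left _ _)
    (integral_mono hX (integrable_max_zero hX) fun _ ↦ le_max_right _ _)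

lemma integral_max_zero_add_le (hX : Integrable X μ) (hY : Integrable Y μ) :
    ∫ ω, max 0 (X ω + Y ω) ∂μ ≤ ∫ ω, max 0 (X ω) ∂μ + ∫ ω, max 0 (Y ω) ∂μ := by
  rw [← integral_add (integrable_max_zero hX) (integrable_max_zero hY)]
  refine integral_mono (integrable_max_zero (hX.add hY))
    ((integrable_max_zero hX).add (integrable_max_zero hY)) fun ω ↦ ?_
  exact max_le (add_nonneg (le_max_left _ _) (le_max_left _ _))
    (add_le_add (le_max_right _ _) (le_max_right _ _))

lemma integral_max_zero_const_sub_eq_setIntegral (μ : Measure ℝ) (a : ℝ) :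
    ∫ x, max 0 (a - x) ∂μ = ∫ x in Iic a, (a - x) ∂μ := by
  rw [← integral_indicator measurableSet_Iic]
  congr 1 with x
  rcases le_or_gt x a with hx | hx
  · rw [indicator_of_mem (mem_Iic.2 hx), max_eq_right (sub_nonneg.2 hx)]
  · rw [indicator_of_notMem (notMem_Iic.2 hx), max_eq_left (sub_nonpos.2 hx.le)]

end PositivePart

section Gaussian

variable {μ : ℝ} {v : ℝ≥0}

lemma integrable_id_gaussianReal : Integrable (fun x ↦ x) (gaussianReal μ v) :=
  memLp_one_iff_integrable.1 (memLp_id_gaussianReal 1)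

lemma hasDerivAt_gaussianPDFReal (x : ℝ) :
    HasDerivAt (gaussianPDFReal μ v) (-((x - μ) / v * gaussianPDFReal μ v x)) x := by
  have hasDerivAt_exponent :
      HasDerivAt (fun y ↦ -(y - μ) ^ 2 / (2 * v)) (-((x - μ) / v)) x := by
    refine ((((hasDerivAt_id x).sub_const μ).pow 2).neg.div_const (2 * (v : ℝ))).congr_deriv ?_
    simp only [id_eq, Nat.cast_ofNat, Nat.add_one_sub_one, pow_one, mul_one]
    rw [neg_div, mul_div_mul_left _ _ two_ne_zero]
  refine (hasDerivAt_exponent.exp.const_mul (√(2 * π * v))⁻¹).congr_deriv ?_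
  rw [gaussianPDFReal]
  ring

lemma integrable_gaussianPDFReal_mul_sub (hv : v ≠ 0) :
    Integrable fun x ↦ gaussianPDFReal μ v x * (x - μ) := by
  have centered_integrable : Integrable (fun x ↦ x - μ) (gaussianReal μ v) :=
    integrable_id_gaussianReal.sub (integrable_const μ)
  rw [gaussianReal_of_var_ne_zero μ hv, integrable_withDensity_iff_integrable_smul'
    (measurable_gaussianPDF μ v) (ae_of_all _ fun _ ↦ gaussianPDF_lt_top)] at centered_integrable
  simpa only [toReal_gaussianPDF, smul_eq_mul] using centered_integrable

lemma setIntegral_Iic_sub_gaussianReal (hv : v ≠ 0) (a : ℝ) :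
    ∫ x in Iic a, (x - μ) ∂gaussianReal μ v = -(v * gaussianPDFReal μ v a) := by
  have hv' : (v : ℝ) ≠ 0 := NNReal.coe_ne_zero.2 hv
  have hasDerivAt_antideriv (x : ℝ) : HasDerivAt (fun y ↦ -(v * gaussianPDFReal μ v y))
      (gaussianPDFReal μ v x * (x - μ)) x := by
    refine ((hasDerivAt_gaussianPDFReal x).const_mul (v : ℝ)).neg.congr_deriv ?_
    field_simp
  have tendsto_antideriv := tendsto_zero_of_hasDerivAt_of_integrableOn_Iic (a := a)
    (fun x _ ↦ hasDerivAt_antideriv x) (integrable_gaussianPDFReal_mul_sub hv).integrableOn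
    ((integrable_gaussianPDFReal μ v).const_mul (v : ℝ)).neg.integrableOn
  rw [gaussianReal_of_var_ne_zero μ hv, setIntegral_withDensity_eq_setIntegral_toReal_smul
    (measurable_gaussianPDF μ v) (ae_of_all _ fun _ ↦ gaussianPDF_lt_top) _ measurableSet_Iic]
  simp only [toReal_gaussianPDF, smul_eq_mul]
  rw [integral_Iic_of_hasDerivAt_of_tendsto' (fun x _ ↦ hasDerivAt_antideriv x)
    (integrable_gaussianPDFReal_mul_sub hv).integrableOn tendsto_antideriv, sub_zero]

lemma integral_max_zero_const_sub_gaussianReal (hv : v ≠ 0) (a : ℝ) :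
    ∫ x, max 0 (a - x) ∂gaussianReal μ v =
      cdf (gaussianReal μ v) a * (a - μ) + v * gaussianPDFReal μ v a := by
  calc ∫ x, max 0 (a - x) ∂gaussianReal μ v
      = ∫ x in Iic a, ((a - μ) - (x - μ)) ∂gaussianReal μ v := by
        simp only [integral_max_zero_const_sub_eq_setIntegral, sub_sub_sub_cancel_right]
    _ = (∫ _ in Iic a, (a - μ) ∂gaussianReal μ v) - ∫ x in Iic a, (x - μ) ∂gaussianReal μ v :=
        integral_sub (integrable_const _)
          (integrable_id_gaussianReal.sub (integrable_const μ)).integrableOn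
    _ = cdf (gaussianReal μ v) a * (a - μ) + v * gaussianPDFReal μ v a := by
        rw [setIntegral_const, setIntegral_Iic_sub_gaussianReal hv, cdf_eq_real, smul_eq_mul,
          sub_neg_eq_add]

end Gaussian

lemma stdGaussPDF_eq_gaussianPDFReal : stdGaussPDF = gaussianPDFReal 0 1 := by
  ext x
  simp [stdGaussPDF, gaussianPDFReal]

lemma stdGaussCDF_eq_cdf : stdGaussCDF = cdf (gaussianReal 0 1) := by
  ext x
  rw [stdGaussCDF, stdGaussPDF_eq_gaussianPDFReal, cdf_eq_real, measureReal_def,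
    gaussianReal_apply_eq_integral 0 one_ne_zero,
    ENNReal.toReal_ofReal (integral_nonneg (gaussianPDFReal_nonneg 0 1))]

section SmoothReLU

variable {σ : ℝ}

lemma smoothReLU_eq_integral (hσ : 0 < σ) (α : ℝ) :
    smoothReLU σ α = ∫ z, max 0 (α - σ * z) ∂gaussianReal 0 1 := by
  have rescale (z : ℝ) : max 0 (α - σ * z) = σ * max 0 (α / σ - z) := by
    rw [mul_max_of_nonneg _ _ hσ.le, mul_zero, mul_sub, mul_div_cancel₀ _ hσ.ne']
  simp only [rescale]
  rw [integral_const_mul, integral_max_zero_const_sub_gaussianReal one_ne_zero, smoothReLU,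
    stdGaussPDF_eq_gaussianPDFReal, stdGaussCDF_eq_cdf, NNReal.coe_one]
  field_simp
  ring

lemma smoothReLU_zero_right (σ : ℝ) : smoothReLU σ 0 = σ / √(2 * π) := by
  simp [smoothReLU, stdGaussPDF, div_eq_inv_mul]

lemma max_zero_le_smoothReLU (hσ : 0 < σ) (α : ℝ) : max 0 α ≤ smoothReLU σ α := by
  have integrable_noise : Integrable (fun z ↦ σ * z) (gaussianReal 0 1) :=
    integrable_id_gaussianReal.const_mul σ
  have mean_eq : ∫ z, (α - σ * z) ∂gaussianReal 0 1 = α := by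
    rw [integral_sub (integrable_const α) integrable_noise, integral_const_mul,
      integral_id_gaussianReal, mul_zero, sub_zero, integral_const, probReal_univ, one_smul]
  calc max 0 α = max 0 (∫ z, (α - σ * z) ∂gaussianReal 0 1) := by rw [mean_eq]
    _ ≤ ∫ z, max 0 (α - σ * z) ∂gaussianReal 0 1 :=
        max_zero_integral_le_integral_max_zero ((integrable_const α).sub integrable_noise)
    _ = smoothReLU σ α := (smoothReLU_eq_integral hσ α).symm

lemma smoothReLU_add_le (hσ : 0 < σ) (α β : ℝ) :
    smoothReLU σ (α + β) ≤ max 0 α + smoothReLU σ β := by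
  have integrable_noise : Integrable (fun z ↦ β - σ * z) (gaussianReal 0 1) :=
    (integrable_const β).sub (integrable_id_gaussianReal.const_mul σ)
  calc smoothReLU σ (α + β)
      = ∫ z, max 0 (α + (β - σ * z)) ∂gaussianReal 0 1 := by
        simp only [smoothReLU_eq_integral hσ, add_sub_assoc]
    _ ≤ ∫ _, max 0 α ∂gaussianReal 0 1 + ∫ z, max 0 (β - σ * z) ∂gaussianReal 0 1 :=
        integral_max_zero_add_le (integrable_const α) integrable_noise
    _ = max 0 α + smoothReLU σ β := by
        rw [integral_const, probReal_univ, one_smul, smoothReLU_eq_integral hσ]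

lemma smoothReLU_le_max_zero_add (hσ : 0 < σ) (α : ℝ) :
    smoothReLU σ α ≤ max 0 α + σ / √(2 * π) := by
  simpa only [add_zero, smoothReLU_zero_right] using smoothReLU_add_le hσ α 0

end SmoothReLU

theorem stmt_18 :
    (∀ σ : ℝ, 0 < σ → ∀ α : ℝ,
      0 ≤ smoothReLU σ α - max 0 α ∧
      smoothReLU σ α - max 0 α ≤ σ / Real.sqrt (2 * Real.pi)) ∧
    (∀ ε : ℝ, 0 < ε → ∃ δ : ℝ, 0 < δ ∧
      ∀ σ : ℝ, 0 < σ → σ < δ → ∀ α : ℝ, |smoothReLU σ α - max 0 α| < ε) := by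
  have lower {σ : ℝ} (hσ : 0 < σ) (α : ℝ) : 0 ≤ smoothReLU σ α - max 0 α :=
    sub_nonneg.2 (max_zero_le_smoothReLU hσ α)
  have upper {σ : ℝ} (hσ : 0 < σ) (α : ℝ) : smoothReLU σ α - max 0 α ≤ σ / √(2 * π) :=
    sub_le_iff_le_add'.2 (smoothReLU_le_max_zero_add hσ α)
  refine ⟨fun σ hσ α ↦ ⟨lower hσ α, upper hσ α⟩, fun ε hε ↦ ?_⟩
  refine ⟨ε * √(2 * π), by positivity, fun σ hσ hσδ α ↦ ?_⟩
  calc |smoothReLU σ α - max 0 α| = smoothReLU σ α - max 0 α := abs_of_nonneg (lower hσ α)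
    _ ≤ σ / √(2 * π) := upper hσ α
    _ < ε := (div_lt_iff₀ (by positivity)).2 hσδ
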